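/- (Independence of the fair order of DRO activations.) Let L be a partial order in which < is well-founded, and let f : ι → L → L be a family of operators each of which is monotone and contracting. Let s and s' be two fair schedules, and let x and x' be the runs of f along s and s' respectively, both from the same start x₀. If x stabilizes at index N (x n = x N for all n ≥ N) and x' stabilizes at index M (x' n = x' M for all n ≥ M), then x N = x' M. -/

import Mathlib

/-!
The limit of a fair run is a common fixed point of all the operators, because each operator is
activated after stabilization, and it lies below the start, because the operators are contracting.
By monotonicity, a common fixed point below the start stays below every term of every run from
that start. So the limit is the greatest common fixed point below the start, whatever the schedule.
-/

open Filter

/-- The sequence `x` is the run of the operators `f` along the schedule `s` from the start `x₀`.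
It is a predicate rather than a recursive definition so that it applies to any sequence given with
its recurrence. -/
structure IsRun {L ι : Type*} (f : ι → L → L) (s : ℕ → ι) (x₀ : L) (x : ℕ → L) : Prop where
  zero : x 0 = x₀
  succ : ∀ n, x (n + 1) = f (s n) (x n)

/-- The schedule `s` is fair: it activates every index infinitely often, so that no operator is
neglected once a run has stabilized. -/
def IsFairSchedule {ι : Type*} (s : ℕ → ι) : Prop :=
  ∀ i N, ∃ n ≥ N, s n = i

namespace IsRun

variable {L ι : Type*} {f : ι → L → L} {s : ℕ → ι} {x₀ y : L} {x : ℕ → L}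

theorem isFixedPt_of_eventually_eq (hx : IsRun f s x₀ x) (hs : IsFairSchedule s)
    (hy : ∀ᶠ n in atTop, x n = y) (i : ι) : Function.IsFixedPt (f i) y := by
  have hy_succ : ∀ᶠ n in atTop, x (n + 1) = y := (tendsto_add_atTop_nat 1).eventually hy
  have hsi : ∃ᶠ n in atTop, s n = i := frequently_atTop.2 (hs i)
  obtain ⟨n, hsn, hn, hn_succ⟩ := (hsi.and_eventually (hy.and hy_succ)).exists
  calc
    f i y = f (s n) (x n) := by rw [hsn, hn]
    _ = x (n + 1) := (hx.succ n).symm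
    _ = y := hn_succ

section Preorder

variable [Preorder L]

theorem antitone (hx : IsRun f s x₀ x) (hcontract : ∀ i y, f i y ≤ y) : Antitone x :=
  antitone_nat_of_succ_le fun n => (hx.succ n).trans_le (hcontract (s n) (x n))

theorem le_of_forall_le_apply (hx : IsRun f s x₀ x) (hmono : ∀ i, Monotone (f i)) {p : L}
    (hp : ∀ i, p ≤ f i p) (hp₀ : p ≤ x₀) (n : ℕ) : p ≤ x n := by
  induction n with
  | zero => exact hp₀.trans_eq hx.zero.symm
  | succ n ih =>
    calc
      p ≤ f (s n) p := hp (s n)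
      _ ≤ f (s n) (x n) := hmono (s n) ih
      _ = x (n + 1) := (hx.succ n).symm

theorem isGreatest_of_eventually_eq (hx : IsRun f s x₀ x) (hmono : ∀ i, Monotone (f i))
    (hcontract : ∀ i y, f i y ≤ y) (hs : IsFairSchedule s) (hy : ∀ᶠ n in atTop, x n = y) :
    IsGreatest {p | p ≤ x₀ ∧ ∀ i, Function.IsFixedPt (f i) p} y := by
  obtain ⟨n, rfl⟩ := hy.exists
  refine ⟨⟨?_, hx.isFixedPt_of_eventually_eq hs hy⟩, ?_⟩
  · exact (hx.antitone hcontract n.zero_le).trans_eq hx.zero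
  · rintro p ⟨hp₀, hp⟩
    exact hx.le_of_forall_le_apply hmono (fun i => (hp i).ge) hp₀ n

end Preorder

end IsRun

theorem fair_runs_same_limit_general {L ι : Type*} [PartialOrder L] {f : ι → L → L}
    (hmono : ∀ i, Monotone (f i)) (hcontract : ∀ i y, f i y ≤ y) {s s' : ℕ → ι}
    (hs : IsFairSchedule s) (hs' : IsFairSchedule s') {x₀ : L} {x x' : ℕ → L}
    (hx : IsRun f s x₀ x) (hx' : IsRun f s' x₀ x') {y y' : L}
    (hy : ∀ᶠ n in atTop, x n = y) (hy' : ∀ᶠ n in atTop, x' n = y') : y = y' :=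
  (hx.isGreatest_of_eventually_eq hmono hcontract hs hy).unique
    (hx'.isGreatest_of_eventually_eq hmono hcontract hs' hy')

/-- Independence of the fair order of DRO activations: two runs of the same
monotone contracting family along two fair schedules from the same start have
the same limit. -/
theorem fair_runs_same_limit {L : Type*} [PartialOrder L] {ι : Type*}
    (hwf : WellFounded ((· < ·) : L → L → Prop))
    (f : ι → L → L) (hmono : ∀ i, Monotone (f i))
    (hcontract : ∀ i, ∀ y : L, f i y ≤ y)
    (s s' : ℕ → ι)
    (hfair : ∀ i : ι, ∀ N : ℕ, ∃ n : ℕ, N ≤ n ∧ s n = i)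
    (hfair' : ∀ i : ι, ∀ N : ℕ, ∃ n : ℕ, N ≤ n ∧ s' n = i)
    (x₀ : L) (x x' : ℕ → L)
    (hx0 : x 0 = x₀) (hxs : ∀ n, x (n + 1) = f (s n) (x n))
    (hx'0 : x' 0 = x₀) (hx's : ∀ n, x' (n + 1) = f (s' n) (x' n))
    (N M : ℕ)
    (hstab : ∀ n : ℕ, N ≤ n → x n = x N)
    (hstab' : ∀ n : ℕ, M ≤ n → x' n = x' M) :
    x N = x' M := by
  exact fair_runs_same_limit_general hmono hcontract hfair hfair' ⟨hx0, hxs⟩ ⟨hx'0, hx's⟩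
    ((eventually_ge_atTop N).mono hstab) ((eventually_ge_atTop M).mono hstab')
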